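/- Let A be an n×n real positive-semidefinite matrix, let r ≥ 1, and fix ε > 0. Suppose the sketch size satisfies k = (1 + 1/ε)·r + 1 (with r < k ≤ n). Let Ω be an n×k random matrix with independent standard normal entries, define the Nyström approximation Â = AΩ((Ω*AΩ)†)Ω*A, and let Â_r = ⟦Â⟧_r. Then E‖A − Â_r‖₁ ≤ (1 + ε) · ‖A − ⟦A⟧_r‖₁. -/

import Mathlib

open Matrix MeasureTheory ProbabilityTheory
open scoped ENNReal NNReal ComplexOrder Classical

namespace PsdSketch

variable {𝕜 : Type*} [RCLike 𝕜]

/-- The four Penrose conditions characterizing the Moore–Penrose pseudoinverse. -/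
def IsMoorePenrose {m k : ℕ} (M : Matrix (Fin m) (Fin k) 𝕜)
    (X : Matrix (Fin k) (Fin m) 𝕜) : Prop :=
  M * X * M = M ∧ X * M * X = X ∧ (M * X)ᴴ = M * X ∧ (X * M)ᴴ = X * M

/-- The Moore–Penrose pseudoinverse `M†` (the unique matrix satisfying the
Penrose conditions). -/
noncomputable def pinv {m k : ℕ} (M : Matrix (Fin m) (Fin k) 𝕜) :
    Matrix (Fin k) (Fin m) 𝕜 :=
  if h : ∃ X, IsMoorePenrose M X then h.choose else 0

/-- The Nyström approximation `Â = A Ω ((Ω* A Ω)†) Ω* A`. -/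
noncomputable def nystrom {n k : ℕ} (A : Matrix (Fin n) (Fin n) 𝕜)
    (Ω : Matrix (Fin n) (Fin k) 𝕜) : Matrix (Fin n) (Fin n) 𝕜 :=
  A * Ω * pinv (Ωᴴ * A * Ω) * Ωᴴ * A

/-- The `i`-th singular value of a square matrix, 0-indexed and listed in weakly
decreasing order (so `sval M 0 = σ₁(M)`), with `sval M i = 0` for `i ≥ n`. -/
noncomputable def sval {n : ℕ} (M : Matrix (Fin n) (Fin n) 𝕜) (i : ℕ) : ℝ :=
  if h : i < n then
    Real.sqrt
      ((Matrix.posSemidef_conjTranspose_mul_self M).1.eigenvalues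
        (Tuple.sort (Matrix.posSemidef_conjTranspose_mul_self M).1.eigenvalues
          (Fin.rev ⟨i, h⟩)))
  else 0

/-- The Schatten `p`-norm: the `ℓ_p` norm of the vector of singular values. -/
noncomputable def schatten {n : ℕ} (p : ℝ≥0∞) (M : Matrix (Fin n) (Fin n) 𝕜) : ℝ :=
  if p = ∞ then sval M 0
  else (∑ i ∈ Finset.range n, sval M i ^ p.toReal) ^ (1 / p.toReal)

/-- `σ_{r+1}^{(p)}(M)`, the optimal rank-`r` approximation error of `M` in the
Schatten `p`-norm: `(Σ_{i > r} σ_i(M)^p)^{1/p}` (for `p = ∞`, `σ_{r+1}(M)`). -/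
noncomputable def tailNorm {n : ℕ} (p : ℝ≥0∞) (M : Matrix (Fin n) (Fin n) 𝕜)
    (r : ℕ) : ℝ :=
  if p = ∞ then sval M r
  else (∑ i ∈ Finset.Ico r n, sval M i ^ p.toReal) ^ (1 / p.toReal)

/-- `B` is a (simultaneous) best rank-`r` approximation of `M` with respect to every
Schatten `p`-norm; this is the defining property of an `r`-truncated SVD `⟦M⟧_r`. -/
def IsBestRankApprox {n : ℕ} (M B : Matrix (Fin n) (Fin n) 𝕜) (r : ℕ) : Prop :=
  B.rank ≤ r ∧
    ∀ p : ℝ≥0∞, 1 ≤ p → ∀ C : Matrix (Fin n) (Fin n) 𝕜, C.rank ≤ r →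
      schatten p (M - B) ≤ schatten p (M - C)

/-- `⟦M⟧_r`: a best rank-`r` approximation of `M` (an `r`-truncated SVD). -/
noncomputable def truncate {n : ℕ} (M : Matrix (Fin n) (Fin n) 𝕜) (r : ℕ) :
    Matrix (Fin n) (Fin n) 𝕜 :=
  if h : ∃ B, IsBestRankApprox M B r then h.choose else 0

/-- The distribution of an `n × k` random matrix with independent standard normal
entries (matrices identified with functions `Fin n → Fin k → ℝ`). -/
noncomputable def gaussianEnsemble (n k : ℕ) : Measure (Fin n → Fin k → ℝ) :=
  Measure.pi fun _ => Measure.pi fun _ => gaussianReal 0 1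


/-! ### Singular values -/

lemma sval_nonneg {n : ℕ} (M : Matrix (Fin n) (Fin n) ℝ) (i : ℕ) : 0 ≤ sval M i := by
  unfold sval
  split_ifs
  · exact Real.sqrt_nonneg _
  · exact le_rfl

lemma sval_antitone {n : ℕ} (M : Matrix (Fin n) (Fin n) ℝ) : Antitone (sval M) := by
  intro i j hij
  by_cases hj : j < n
  · have hi : i < n := lt_of_le_of_lt hij hj
    simp only [sval, hi, hj, dif_pos]
    apply Real.sqrt_le_sqrt
    apply Tuple.monotone_sort (Matrix.posSemidef_conjTranspose_mul_self M).1.eigenvalues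
    rw [Fin.rev_le_rev]
    exact hij
  · have : sval M j = 0 := by simp [sval, hj]
    rw [this]
    exact sval_nonneg M i

lemma exists_svd {n : ℕ} (M : Matrix (Fin n) (Fin n) ℝ) :
    ∃ U : Matrix (Fin n) (Fin n) ℝ, Uᵀ * U = 1 ∧ U * Uᵀ = 1 ∧
      Mᵀ * M = U * diagonal (fun i : Fin n => sval M i ^ 2) * Uᵀ := by
  have hM := Matrix.posSemidef_conjTranspose_mul_self M
  let e : Equiv.Perm (Fin n) := Fin.revPerm.trans (Tuple.sort hM.1.eigenvalues)
  let U₀ : Matrix (Fin n) (Fin n) ℝ := hM.1.eigenvectorUnitary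
  have h1 : U₀ᵀ * U₀ = 1 := by
    have := Unitary.coe_star_mul_self hM.1.eigenvectorUnitary
    rw [Matrix.star_eq_conjTranspose, conjTranspose_eq_transpose_of_trivial] at this
    exact this
  have h2 : U₀ * U₀ᵀ = 1 := mul_eq_one_comm.mp h1
  have hs : Mᵀ * M = U₀ * diagonal hM.1.eigenvalues * U₀ᵀ := by
    have := hM.1.spectral_theorem
    rw [Unitary.conjStarAlgAut_apply] at this
    have h3 : (RCLike.ofReal ∘ hM.1.eigenvalues : Fin n → ℝ) = hM.1.eigenvalues := by
      ext i; simp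
    rw [h3] at this
    rw [← conjTranspose_eq_transpose_of_trivial M, ← conjTranspose_eq_transpose_of_trivial U₀]
    exact this
  have hd : diagonal (fun i : Fin n => sval M i ^ 2) = (diagonal hM.1.eigenvalues).submatrix e e := by
    rw [Matrix.submatrix_diagonal_equiv]
    congr 1
    ext i
    simp only [sval, i.2, dif_pos, Fin.eta]
    rw [Real.sq_sqrt (hM.eigenvalues_nonneg _)]
    rfl
  have h4 : U₀.submatrix id e * (U₀.submatrix id e)ᵀ = 1 := by
    rw [Matrix.transpose_submatrix, Matrix.submatrix_mul_equiv, h2]; simp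
  refine ⟨U₀.submatrix id e, mul_eq_one_comm.mp h4, h4, ?_⟩
  · rw [hd, Matrix.transpose_submatrix, Matrix.submatrix_mul_equiv, Matrix.submatrix_mul_equiv, hs]
    simp


lemma exists_ker_vec {n : ℕ} {W : Type*} [AddCommGroup W] [Module ℝ W] [FiniteDimensional ℝ W]
    (L : (Fin n → ℝ) →ₗ[ℝ] W) (h : Module.finrank ℝ W < n) :
    ∃ x : Fin n → ℝ, x ≠ 0 ∧ L x = 0 := by
  have := LinearMap.ker_ne_bot_of_finrank_lt (f := L) (by simpa using h)
  obtain ⟨x, hx, hx0⟩ := (Submodule.ne_bot_iff _).mp this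
  exact ⟨x, hx0, hx⟩

/-- Coordinates of `Uᵀ x` indexed by a subtype. -/
noncomputable def coordMap {n : ℕ} (U : Matrix (Fin n) (Fin n) ℝ) (p : Fin n → Prop) :
    (Fin n → ℝ) →ₗ[ℝ] ({j // p j} → ℝ) :=
  LinearMap.pi fun j => (LinearMap.proj j.1) ∘ₗ (Uᵀ).mulVecLin

lemma coordMap_apply {n : ℕ} (U : Matrix (Fin n) (Fin n) ℝ) (p : Fin n → Prop) (x : Fin n → ℝ)
    (h : coordMap U p x = 0) (j : Fin n) (hj : p j) : (Uᵀ *ᵥ x) j = 0 := by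
  exact congrFun h ⟨j, hj⟩

lemma sq_norm_mulVec {n m : ℕ} (M : Matrix (Fin m) (Fin n) ℝ) (U : Matrix (Fin n) (Fin n) ℝ)
    (d : Fin n → ℝ) (h : Mᵀ * M = U * diagonal d * Uᵀ) (x : Fin n → ℝ) :
    (M *ᵥ x) ⬝ᵥ (M *ᵥ x) = ∑ j, d j * ((Uᵀ *ᵥ x) j) ^ 2 := by
  have h1 : (M *ᵥ x) ⬝ᵥ (M *ᵥ x) = x ⬝ᵥ ((Mᵀ * M) *ᵥ x) := by
    rw [← Matrix.mulVec_mulVec, Matrix.dotProduct_mulVec x, Matrix.vecMul_transpose]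
  rw [h1, h, ← Matrix.mulVec_mulVec, ← Matrix.mulVec_mulVec, Matrix.dotProduct_mulVec,
    ← Matrix.mulVec_transpose]
  simp only [dotProduct, mulVec_diagonal]
  exact Finset.sum_congr rfl fun j _ => by ring

lemma sq_norm_orth {n : ℕ} (U : Matrix (Fin n) (Fin n) ℝ) (h : U * Uᵀ = 1) (x : Fin n → ℝ) :
    x ⬝ᵥ x = ∑ j, ((Uᵀ *ᵥ x) j) ^ 2 := by
  have := sq_norm_mulVec (1 : Matrix (Fin n) (Fin n) ℝ) U (fun _ => 1) (by simp [h]) x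
  simpa using this

lemma sval_le_of {n : ℕ} (M : Matrix (Fin n) (Fin n) ℝ) (U : Matrix (Fin n) (Fin n) ℝ)
    (hU : U * Uᵀ = 1) (hM : Mᵀ * M = U * diagonal (fun i : Fin n => sval M i ^ 2) * Uᵀ)
    (i : ℕ) (s : ℝ) (hs : 0 ≤ s) (x : Fin n → ℝ) (hx : x ≠ 0)
    (hxi : ∀ j : Fin n, i < j → (Uᵀ *ᵥ x) j = 0)
    (hle : (M *ᵥ x) ⬝ᵥ (M *ᵥ x) ≤ s ^ 2 * (x ⬝ᵥ x)) : sval M i ≤ s := by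
  rw [sq_norm_mulVec M U _ hM] at hle
  have h1 : sval M i ^ 2 * (x ⬝ᵥ x) ≤ ∑ j : Fin n, sval M j ^ 2 * ((Uᵀ *ᵥ x) j) ^ 2 := by
    rw [sq_norm_orth U hU, Finset.mul_sum]
    apply Finset.sum_le_sum
    intro j _
    by_cases hj : i < j
    · simp [hxi j hj]
    · apply mul_le_mul_of_nonneg_right _ (sq_nonneg _)
      exact pow_le_pow_left₀ (sval_nonneg _ _) (sval_antitone M (not_lt.mp hj)) 2
  have hpos : 0 < x ⬝ᵥ x := by
    have : 0 ≤ x ⬝ᵥ x := by simpa using dotProduct_self_star_nonneg x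
    refine lt_of_le_of_ne this fun h => hx ?_
    exact dotProduct_self_eq_zero.mp h.symm
  have h2 := le_of_mul_le_mul_right (h1.trans hle) hpos
  exact le_of_sq_le_sq h2 hs

lemma card_gt {n i : ℕ} (hi : i < n) : Fintype.card {j : Fin n // i < j} = n - i - 1 := by
  rw [Fintype.card_subtype]
  have : (Finset.univ.filter fun j : Fin n => i < j) = Finset.Ioi ⟨i, hi⟩ := by
    ext j; simp [Fin.lt_def]
  rw [this, Fin.card_Ioi]
  simp only
  omega

lemma card_Ico_le {n a b : ℕ} : Fintype.card {j : Fin n // a ≤ j ∧ (j : ℕ) < b} ≤ b - a := by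
  rw [← Nat.card_Ico, Fintype.card_subtype]
  apply Finset.card_le_card_of_injOn (fun j : Fin n => (j : ℕ))
  · intro j hj
    simpa using hj
  · intro a _ b _ h
    exact Fin.ext h

lemma weyl {n r : ℕ} (M C : Matrix (Fin n) (Fin n) ℝ) (hC : C.rank ≤ r) (i : ℕ) :
    sval M (i + r) ≤ sval (M - C) i := by
  by_cases hi : i + r < n
  swap
  · have : sval M (i + r) = 0 := by simp [sval, hi]
    rw [this]; exact sval_nonneg _ _
  obtain ⟨U, -, hU, hM⟩ := exists_svd M
  obtain ⟨U', -, hU', hM'⟩ := exists_svd (M - C)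
  obtain ⟨x, hx0, hx⟩ := exists_ker_vec
    ((coordMap U' (fun j => 0 ≤ (j : ℕ) ∧ (j : ℕ) < i)).prod
      ((C.mulVecLin.rangeRestrict).prod (coordMap U (fun j => i + r < j)))) (by
      rw [Module.finrank_prod, Module.finrank_prod, Module.finrank_fintype_fun_eq_card,
        Module.finrank_fintype_fun_eq_card, card_gt hi]
      have := card_Ico_le (n := n) (a := 0) (b := i)
      change C.rank ≤ r at hC
      unfold Matrix.rank at hC
      omega)
  have h1 := congrArg Prod.fst hx
  have h2 := congrArg (fun z => z.2.1) hx
  have h3 := congrArg (fun z => z.2.2) hx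
  have h2' : C *ᵥ x = 0 := by
    have := congrArg Subtype.val h2
    simpa using this
  apply sval_le_of M U hU hM (i + r) _ (sval_nonneg _ _) x hx0
  · intro j hj
    exact coordMap_apply _ _ _ h3 j hj
  · have : M *ᵥ x = (M - C) *ᵥ x := by rw [Matrix.sub_mulVec, h2', sub_zero]
    rw [this, sq_norm_mulVec (M - C) U' _ hM', sq_norm_orth U' hU', Finset.mul_sum]
    apply Finset.sum_le_sum
    intro j _
    by_cases hj : (j : ℕ) < i
    · simp [coordMap_apply _ _ _ h1 j ⟨Nat.zero_le _, hj⟩]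
    · apply mul_le_mul_of_nonneg_right _ (sq_nonneg _)
      exact pow_le_pow_left₀ (sval_nonneg _ _) (sval_antitone _ (not_lt.mp hj)) 2

lemma exists_trunc {n : ℕ} (M : Matrix (Fin n) (Fin n) ℝ) (r : ℕ) :
    ∃ B : Matrix (Fin n) (Fin n) ℝ, B.rank ≤ r ∧ ∀ i, sval (M - B) i ≤ sval M (i + r) := by
  obtain ⟨U, hU1, hU, hM⟩ := exists_svd M
  let e : Fin n → ℝ := fun j => if (j : ℕ) < r then 1 else 0
  let B := M * (U * diagonal e * Uᵀ)
  have hNB : M - B = M * (U * diagonal (1 - e) * Uᵀ) := by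
    have : diagonal (1 - e) = 1 - diagonal e := by
      rw [← diagonal_one, diagonal_sub]; rfl
    rw [this, mul_sub, sub_mul, mul_one, hU, mul_sub, mul_one]
  have hN : (M - B)ᵀ * (M - B) =
      U * diagonal (fun i : Fin n => (1 - e i) * (sval M i ^ 2)) * Uᵀ := by
    rw [hNB, transpose_mul, transpose_mul, transpose_mul, transpose_transpose, diagonal_transpose]
    calc _ = U * diagonal (1 - e) * Uᵀ * (Mᵀ * M) * (U * diagonal (1 - e) * Uᵀ) := by
          simp only [Matrix.mul_assoc]
      _ = U * diagonal (1 - e) * (Uᵀ * U) * diagonal (fun i : Fin n => sval M i ^ 2) *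
            (Uᵀ * U) * diagonal (1 - e) * Uᵀ := by
          rw [hM]; simp only [Matrix.mul_assoc]
      _ = U * (diagonal (1 - e) * diagonal (fun i : Fin n => sval M i ^ 2) *
            diagonal (1 - e)) * Uᵀ := by
          rw [hU1]; simp only [Matrix.mul_assoc, Matrix.one_mul]
      _ = _ := by
          rw [diagonal_mul_diagonal, diagonal_mul_diagonal]
          congr 3
          ext i
          simp only [e, Pi.sub_apply, Pi.one_apply]
          split_ifs <;> simp
  refine ⟨B, ?_, ?_⟩
  · calc B.rank ≤ (U * diagonal e * Uᵀ).rank := rank_mul_le_right _ _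
      _ ≤ (U * diagonal e).rank := rank_mul_le_left _ _
      _ ≤ (diagonal e).rank := rank_mul_le_right _ _
      _ = Fintype.card {i // e i ≠ 0} := rank_diagonal _
      _ ≤ Fintype.card {j : Fin n // 0 ≤ (j : ℕ) ∧ (j : ℕ) < r} := by
          apply Fintype.card_subtype_mono
          intro i hi
          by_contra h
          exact hi (by simp only [e]; rw [if_neg]; exact fun h' => h ⟨Nat.zero_le _, h'⟩)
      _ ≤ r := card_Ico_le
  · intro i
    by_cases hi : i < n
    swap
    · have : sval (M - B) i = 0 := by simp [sval, hi]
      rw [this]; exact sval_nonneg _ _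
    obtain ⟨U', -, hU', hM'⟩ := exists_svd (M - B)
    obtain ⟨x, hx0, hx⟩ := exists_ker_vec
      ((coordMap U (fun j => r ≤ (j : ℕ) ∧ (j : ℕ) < i + r)).prod
        (coordMap U' (fun j => i < j))) (by
        rw [Module.finrank_prod, Module.finrank_fintype_fun_eq_card,
          Module.finrank_fintype_fun_eq_card, card_gt hi]
        have := card_Ico_le (n := n) (a := r) (b := i + r)
        omega)
    have h1 := congrArg Prod.fst hx
    have h2 := congrArg Prod.snd hx
    apply sval_le_of (M - B) U' hU' hM' i _ (sval_nonneg _ _) x hx0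
    · intro j hj
      exact coordMap_apply _ _ _ h2 j hj
    · rw [sq_norm_mulVec (M - B) U _ hN, sq_norm_orth U hU, Finset.mul_sum]
      apply Finset.sum_le_sum
      intro j _
      by_cases hj : (j : ℕ) < r
      · simp only [e, hj, if_true, sub_self, zero_mul]
        positivity
      · by_cases hj' : (j : ℕ) < i + r
        · simp [coordMap_apply _ _ _ h1 j ⟨not_lt.mp hj, hj'⟩]
        · apply mul_le_mul_of_nonneg_right _ (sq_nonneg _)
          simp only [e, hj, if_false, sub_zero, one_mul]
          exact pow_le_pow_left₀ (sval_nonneg _ _) (sval_antitone _ (not_lt.mp hj')) 2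

lemma schatten_mono {n : ℕ} (p : ℝ≥0∞) (M N : Matrix (Fin n) (Fin n) ℝ)
    (h : ∀ i, sval M i ≤ sval N i) : schatten p M ≤ schatten p N := by
  unfold schatten
  split_ifs
  · exact h 0
  · apply Real.rpow_le_rpow
    · exact Finset.sum_nonneg fun i _ => Real.rpow_nonneg (sval_nonneg _ _) _
    · apply Finset.sum_le_sum
      intro i _
      exact Real.rpow_le_rpow (sval_nonneg _ _) (h i) ENNReal.toReal_nonneg
    · have : 0 ≤ p.toReal := ENNReal.toReal_nonneg
      positivity

lemma truncate_spec {n : ℕ} (M : Matrix (Fin n) (Fin n) ℝ) (r : ℕ) :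
    IsBestRankApprox M (truncate M r) r := by
  have h : ∃ B, IsBestRankApprox M B r := by
    obtain ⟨B, hB, hs⟩ := exists_trunc M r
    exact ⟨B, hB, fun p _ C hC => schatten_mono p _ _ fun i => (hs i).trans (weyl M C hC i)⟩
  rw [truncate, dif_pos h]
  exact h.choose_spec

lemma schatten_one {n : ℕ} (M : Matrix (Fin n) (Fin n) ℝ) :
    schatten 1 M = ∑ i ∈ Finset.range n, sval M i := by
  simp [schatten]

lemma schatten_two {n : ℕ} (M : Matrix (Fin n) (Fin n) ℝ) :
    schatten 2 M = Real.sqrt (Mᵀ * M).trace := by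
  obtain ⟨U, hU1, hU, hM⟩ := exists_svd M
  rw [hM, Matrix.trace_mul_comm, ← Matrix.mul_assoc, hU1, Matrix.one_mul, trace_diagonal]
  rw [Real.sqrt_eq_rpow]
  simp [schatten, Finset.sum_range]

lemma schatten_nonneg {n : ℕ} (M : Matrix (Fin n) (Fin n) ℝ) : 0 ≤ schatten 1 M := by
  rw [schatten_one]
  exact Finset.sum_nonneg fun i _ => sval_nonneg _ _

open scoped MatrixOrder in
lemma psd_eq_of_sq {n : ℕ} {A B : Matrix (Fin n) (Fin n) ℝ} (hA : A.PosSemidef)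
    (hB : B.PosSemidef) (h : A * A = B * B) : A = B := by
  rw [← CFC.sqrt_mul_self A hA.nonneg, h, CFC.sqrt_mul_self B hB.nonneg]

open scoped MatrixOrder in
lemma psd_commute {n : ℕ} {A P : Matrix (Fin n) (Fin n) ℝ} (hA : A.PosSemidef)
    (h : Commute (A * A) P) : Commute A P := by
  have := h.cfcₙ_nnreal NNReal.sqrt
  rw [← CFC.sqrt_mul_self A hA.nonneg]
  exact this

lemma psd_spectral {n : ℕ} {A : Matrix (Fin n) (Fin n) ℝ} (hA : A.PosSemidef) :
    ∃ U : Matrix (Fin n) (Fin n) ℝ, Uᵀ * U = 1 ∧ U * Uᵀ = 1 ∧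
      A = U * diagonal (fun i : Fin n => sval A i) * Uᵀ := by
  obtain ⟨U, hU1, hU, hM⟩ := exists_svd A
  refine ⟨U, hU1, hU, ?_⟩
  apply psd_eq_of_sq hA
  · have : (diagonal (fun i : Fin n => sval A i)).PosSemidef :=
      PosSemidef.diagonal fun i => sval_nonneg _ _
    have := this.mul_mul_conjTranspose_same U
    rwa [conjTranspose_eq_transpose_of_trivial] at this
  · have hAt : Aᵀ = A := by
      have := hA.1
      rwa [IsHermitian, conjTranspose_eq_transpose_of_trivial] at this
    rw [hAt] at hM
    rw [hM]
    calc _ = U * (diagonal (fun i : Fin n => sval A i) * diagonal (fun i : Fin n => sval A i)) * Uᵀ := by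
          rw [diagonal_mul_diagonal]; simp only [sq]
      _ = U * (diagonal (fun i : Fin n => sval A i) * (Uᵀ * U) * diagonal (fun i : Fin n => sval A i)) * Uᵀ := by
          rw [hU1, Matrix.mul_one]
      _ = _ := by simp only [Matrix.mul_assoc]

lemma schatten_one_psd {n : ℕ} {A : Matrix (Fin n) (Fin n) ℝ} (hA : A.PosSemidef) :
    schatten 1 A = A.trace := by
  obtain ⟨U, hU1, hU, hM⟩ := psd_spectral hA
  conv_rhs => rw [hM]
  rw [Matrix.trace_mul_comm, ← Matrix.mul_assoc, hU1, Matrix.one_mul, trace_diagonal,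
    schatten_one, Finset.sum_range]

/-- Lower bound on the rank-`r` approximation error. -/
lemma tail_le_schatten {n r : ℕ} (A D : Matrix (Fin n) (Fin n) ℝ) (hD : D.rank ≤ r) :
    ∑ i : Fin n, (if (i : ℕ) < r then 0 else sval A i) ≤ schatten 1 (A - D) := by
  rw [schatten_one, ← Finset.sum_range (fun i => if i < r then 0 else sval A i)]
  have h1 : ∑ i ∈ Finset.range n, (if i < r then 0 else sval A i) ≤
      ∑ i ∈ Finset.range (r + n), (if i < r then 0 else sval A i) := by
    apply Finset.sum_le_sum_of_subset_of_nonneg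
    · exact Finset.range_mono (by omega)
    · intro i _ _
      split_ifs
      · exact le_rfl
      · exact sval_nonneg _ _
  refine h1.trans ?_
  rw [Finset.sum_range_add]
  have h2 : ∑ i ∈ Finset.range r, (if i < r then 0 else sval A i) = 0 := by
    apply Finset.sum_eq_zero
    intro i hi
    rw [if_pos (Finset.mem_range.mp hi)]
  rw [h2, zero_add]
  apply Finset.sum_le_sum
  intro i _
  rw [if_neg (by omega), add_comm]
  exact weyl A D hD i



/-! ### Orthogonal projectors and the deterministic error bound -/

lemma pinv_spec {k : ℕ} {H : Matrix (Fin k) (Fin k) ℝ} (hH : H.PosSemidef) :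
    IsMoorePenrose H (pinv H) := by
  have h : ∃ X, IsMoorePenrose H X := by
    obtain ⟨U, hU1, hU, hs⟩ := psd_spectral hH
    have key : ∀ a b : Fin k → ℝ, (U * diagonal a * Uᵀ) * (U * diagonal b * Uᵀ) =
        U * diagonal (fun i => a i * b i) * Uᵀ := by
      intro a b
      calc _ = U * diagonal a * (Uᵀ * U) * diagonal b * Uᵀ := by simp only [Matrix.mul_assoc]
        _ = _ := by rw [hU1, Matrix.mul_one, Matrix.mul_assoc U, diagonal_mul_diagonal]
    have hT : ∀ a : Fin k → ℝ, (U * diagonal a * Uᵀ)ᴴ = U * diagonal a * Uᵀ := by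
      intro a
      rw [conjTranspose_eq_transpose_of_trivial, transpose_mul, transpose_mul, diagonal_transpose,
        transpose_transpose, Matrix.mul_assoc]
    obtain ⟨d, hd⟩ : ∃ d : Fin k → ℝ, H = U * diagonal d * Uᵀ := ⟨_, hs⟩
    have e1 : ∀ x : ℝ, x * x⁻¹ * x = x := fun x => by
      by_cases hx : x = 0 <;> simp [hx]
    have e2 : ∀ x : ℝ, x⁻¹ * x * x⁻¹ = x⁻¹ := fun x => by
      by_cases hx : x = 0 <;> simp [hx]
    refine ⟨U * diagonal (fun i : Fin k => (d i)⁻¹) * Uᵀ, ?_, ?_, ?_, ?_⟩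
    · rw [hd, key, key]; simp only [e1]
    · rw [hd, key, key]; simp only [e2]
    · rw [hd, key, hT]
    · rw [hd, key, hT]
  rw [pinv, dif_pos h]
  exact h.choose_spec

lemma gram_psd {n k : ℕ} (Y : Matrix (Fin n) (Fin k) ℝ) : (Yᵀ * Y).PosSemidef := by
  have := posSemidef_conjTranspose_mul_self Y
  rwa [conjTranspose_eq_transpose_of_trivial] at this

/-- Orthogonal projector onto the column space. -/
noncomputable def projOf {n k : ℕ} (Y : Matrix (Fin n) (Fin k) ℝ) : Matrix (Fin n) (Fin n) ℝ :=
  Y * pinv (Yᵀ * Y) * Yᵀ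

lemma eq_zero_of_gram {n k m : ℕ} (Y : Matrix (Fin n) (Fin k) ℝ) (Z : Matrix (Fin k) (Fin m) ℝ)
    (h : Yᵀ * Y * Z = 0) : Y * Z = 0 := by
  rw [← conjTranspose_mul_self_eq_zero, conjTranspose_eq_transpose_of_trivial, transpose_mul,
    Matrix.mul_assoc, ← Matrix.mul_assoc Yᵀ, h, Matrix.mul_zero]

lemma projOf_mul_self {n k : ℕ} (Y : Matrix (Fin n) (Fin k) ℝ) : projOf Y * Y = Y := by
  obtain ⟨h1, -, -, -⟩ := pinv_spec (gram_psd Y)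
  have := eq_zero_of_gram Y (pinv (Yᵀ * Y) * (Yᵀ * Y) - 1) (by
    rw [Matrix.mul_sub, ← Matrix.mul_assoc, h1, Matrix.mul_one, sub_self])
  rw [Matrix.mul_sub, Matrix.mul_one, sub_eq_zero] at this
  rw [projOf]
  simpa only [Matrix.mul_assoc] using this

lemma projOf_transpose {n k : ℕ} (Y : Matrix (Fin n) (Fin k) ℝ) : (projOf Y)ᵀ = projOf Y := by
  have h1 := projOf_mul_self Y
  have h2 : projOf Y = projOf Y * (projOf Y)ᵀ := by
    have : Yᵀ = Yᵀ * (projOf Y)ᵀ := by rw [← transpose_mul, h1]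
    calc projOf Y = Y * pinv (Yᵀ * Y) * Yᵀ := rfl
      _ = Y * pinv (Yᵀ * Y) * (Yᵀ * (projOf Y)ᵀ) := by rw [← this]
      _ = projOf Y * (projOf Y)ᵀ := by rw [← Matrix.mul_assoc]; rfl
  rw [h2, transpose_mul, transpose_transpose]

lemma projOf_mul_of {n k m : ℕ} (Y : Matrix (Fin n) (Fin k) ℝ) (P : Matrix (Fin m) (Fin n) ℝ)
    {Q : Matrix (Fin m) (Fin n) ℝ} (h : P * Y = Q * Y) : P * projOf Y = Q * projOf Y := by
  rw [projOf, ← Matrix.mul_assoc, ← Matrix.mul_assoc, h]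
  simp only [Matrix.mul_assoc]

lemma projOf_idem {n k : ℕ} (Y : Matrix (Fin n) (Fin k) ℝ) : projOf Y * projOf Y = projOf Y := by
  have := projOf_mul_of Y (projOf Y) (Q := 1) (by rw [projOf_mul_self, Matrix.one_mul])
  rwa [Matrix.one_mul] at this

lemma projOf_rank {n k : ℕ} (Y : Matrix (Fin n) (Fin k) ℝ) : (projOf Y).rank ≤ Y.rank := by
  rw [projOf, Matrix.mul_assoc]
  exact rank_mul_le_left _ _

lemma psd_of_proj {n m : ℕ} {P : Matrix (Fin n) (Fin n) ℝ} (h1 : Pᵀ = P) (h2 : P * P = P)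
    (W : Matrix (Fin n) (Fin m) ℝ) : (Wᵀ * P * W).PosSemidef := by
  have := gram_psd (P * W)
  rw [transpose_mul, h1, Matrix.mul_assoc, ← Matrix.mul_assoc P, h2] at this
  rwa [Matrix.mul_assoc]

/-- The squared Frobenius norm. -/
noncomputable def frob {n m : ℕ} (M : Matrix (Fin n) (Fin m) ℝ) : ℝ := (Mᵀ * M).trace

lemma frob_eq {n m : ℕ} (M : Matrix (Fin n) (Fin m) ℝ) : frob M = ∑ i, ∑ j, M i j ^ 2 := by
  rw [Finset.sum_comm]
  simp [frob, trace, Matrix.mul_apply, sq]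

lemma frob_nonneg {n m : ℕ} (M : Matrix (Fin n) (Fin m) ℝ) : 0 ≤ frob M := by
  rw [frob_eq]; positivity

lemma frob_transpose {n m : ℕ} (M : Matrix (Fin n) (Fin m) ℝ) : frob Mᵀ = frob M := by
  rw [frob, frob, transpose_transpose, Matrix.trace_mul_comm]

lemma frob_eq_zero {n m : ℕ} {M : Matrix (Fin n) (Fin m) ℝ} (h : frob M = 0) : M = 0 := by
  rw [← conjTranspose_mul_self_eq_zero, conjTranspose_eq_transpose_of_trivial]
  exact (gram_psd M).trace_eq_zero_iff.mp h

/-- Pythagoras for an orthogonal projector. -/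
lemma frob_pyth {n m : ℕ} {P : Matrix (Fin n) (Fin n) ℝ} (h1 : Pᵀ = P) (h2 : P * P = P)
    (W : Matrix (Fin n) (Fin m) ℝ) : frob W = frob (P * W) + frob (W - P * W) := by
  have h3 : Wᵀ * P * (P * W) = Wᵀ * (P * W) := by
    rw [Matrix.mul_assoc, ← Matrix.mul_assoc P, h2]
  rw [frob, frob, frob, ← trace_add, transpose_sub, transpose_mul, h1, h3]
  congr 1
  rw [Matrix.sub_mul, Matrix.mul_sub, Matrix.mul_sub, h3, Matrix.mul_assoc]
  abel

lemma best_eq_proj {n r : ℕ} {M B : Matrix (Fin n) (Fin n) ℝ} (hB : B.rank ≤ r)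
    (h : ∀ C : Matrix (Fin n) (Fin n) ℝ, C.rank ≤ r → frob (M - B) ≤ frob (M - C)) :
    projOf B * M = B := by
  have hP1 := projOf_transpose B
  have hP2 := projOf_idem B
  have h3 := frob_pyth hP1 hP2 (M - B)
  have h4 := h (projOf B * M) ((rank_mul_le_left _ _).trans ((projOf_rank B).trans hB))
  have h5 : M - B - projOf B * (M - B) = M - projOf B * M := by
    rw [Matrix.mul_sub, projOf_mul_self]; abel
  rw [h5] at h3
  have h6 : frob (projOf B * (M - B)) = 0 := le_antisymm (by linarith) (frob_nonneg _)
  have h7 := frob_eq_zero h6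
  rwa [Matrix.mul_sub, projOf_mul_self, sub_eq_zero] at h7

lemma best_psd {n r : ℕ} {M B : Matrix (Fin n) (Fin n) ℝ} (hM : M.PosSemidef)
    (hB : IsBestRankApprox M B r) : (M - B).PosSemidef := by
  obtain ⟨hr, hopt⟩ := hB
  have hMt : Mᵀ = M := by
    have := hM.1
    rwa [IsHermitian, conjTranspose_eq_transpose_of_trivial] at this
  have hf : ∀ C : Matrix (Fin n) (Fin n) ℝ, C.rank ≤ r → frob (M - B) ≤ frob (M - C) := by
    intro C hC
    have := hopt 2 (by norm_num) C hC
    rw [schatten_two, schatten_two] at this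
    exact (Real.sqrt_le_sqrt_iff (frob_nonneg _)).mp this
  have h1 : projOf B * M = B := best_eq_proj hr hf
  have h2 : projOf Bᵀ * M = Bᵀ := by
    apply best_eq_proj (r := r) (by rwa [rank_transpose])
    intro C hC
    have := hf Cᵀ (by rwa [rank_transpose])
    rw [← frob_transpose, ← frob_transpose (M - Cᵀ), transpose_sub, transpose_sub,
      transpose_transpose, hMt] at this
    exact this
  have h3 : M * projOf Bᵀ = B := by
    have := congrArg transpose h2
    rwa [transpose_mul, transpose_transpose, hMt, projOf_transpose] at this
  set P := projOf B with hP
  have hP1 : Pᵀ = P := projOf_transpose B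
  have hP2 : P * P = P := projOf_idem B
  have h4 : P * (M * M) = M * M * P := by
    have h5 : P * (M * M) = M * projOf Bᵀ * M := by rw [← Matrix.mul_assoc, h1, h3]
    have h6 := congrArg transpose h5
    simp only [transpose_mul, hMt, hP1, projOf_transpose] at h6
    rw [h6, h5, Matrix.mul_assoc]
  have h7 : M * P = P * M := psd_commute hM (show Commute (M * M) P from h4.symm)
  have h8 : M - B = (1 - P)ᵀ * M * (1 - P) := by
    rw [transpose_sub, transpose_one, hP1, Matrix.sub_mul, Matrix.one_mul, Matrix.sub_mul,
      Matrix.mul_sub, Matrix.mul_sub, Matrix.mul_one, Matrix.mul_one, Matrix.mul_assoc P M P, h7,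
      ← Matrix.mul_assoc, hP2, h1]
    abel
  rw [h8, ← conjTranspose_eq_transpose_of_trivial]
  exact hM.conjTranspose_mul_mul_same _

lemma det_bound {n k r : ℕ} {A S : Matrix (Fin n) (Fin n) ℝ} (hS : Sᵀ = S)
    (hSA : S * S = A) (Ω : Matrix (Fin n) (Fin k) ℝ) (X : Matrix (Fin k) (Fin n) ℝ)
    (hX : X.rank ≤ r) :
    schatten 1 (A - truncate (nystrom A Ω) r) ≤ frob (S - S * Ω * X) := by
  set P := projOf (S * Ω) with hP
  have hP1 : Pᵀ = P := projOf_transpose _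
  have hP2 : P * P = P := projOf_idem _
  have hny : nystrom A Ω = Sᵀ * P * S := by
    rw [nystrom, hP, projOf, transpose_mul, hS, conjTranspose_eq_transpose_of_trivial,
      show Ωᵀ * S * (S * Ω) = Ωᵀ * A * Ω by rw [← hSA]; simp only [Matrix.mul_assoc]]
    rw [← hSA]
    simp only [Matrix.mul_assoc]
  set N := nystrom A Ω with hN
  have hNpsd : N.PosSemidef := by rw [hny]; exact psd_of_proj hP1 hP2 S
  have hAN : (A - N).PosSemidef := by
    have := psd_of_proj (P := 1 - P) (by rw [transpose_sub, transpose_one, hP1])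
      (by rw [Matrix.mul_sub, Matrix.sub_mul, Matrix.sub_mul, hP2]; simp) S
    rw [Matrix.mul_sub, Matrix.sub_mul, Matrix.mul_one, ← hny, hS, hSA] at this
    exact this
  set B := truncate N r with hB
  have hbest : IsBestRankApprox N B r := truncate_spec N r
  have hNB : (N - B).PosSemidef := best_psd hNpsd hbest
  set Z := S * Ω * X with hZ
  set Q := projOf Z with hQ
  have hQ1 : Qᵀ = Q := projOf_transpose _
  have hQ2 : Q * Q = Q := projOf_idem _
  have hPQ : P * Q = Q := by
    have := projOf_mul_of Z P (Q := 1) (by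
      rw [hZ, Matrix.one_mul, ← Matrix.mul_assoc, hP, projOf_mul_self])
    rwa [Matrix.one_mul] at this
  have hQP : Q * P = Q := by
    have := congrArg transpose hPQ
    rwa [transpose_mul, hP1, hQ1] at this
  have hZr : Z.rank ≤ r := (rank_mul_le_right _ _).trans hX
  have hCr : (Sᵀ * Q * S).rank ≤ r :=
    (rank_mul_le_left _ _).trans ((rank_mul_le_right _ _).trans ((projOf_rank _).trans hZr))
  have hNC : (N - Sᵀ * Q * S).PosSemidef := by
    have := psd_of_proj (P := P - Q) (by rw [transpose_sub, hP1, hQ1])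
      (by rw [Matrix.mul_sub, Matrix.sub_mul, Matrix.sub_mul, hP2, hPQ, hQP, hQ2]; abel) S
    rw [Matrix.mul_sub, Matrix.sub_mul, ← hny] at this
    exact this
  have h1 := hbest.2 1 le_rfl _ hCr
  rw [schatten_one_psd hNB, schatten_one_psd hNC] at h1
  have hAB : (A - B).PosSemidef := by
    have := hAN.add hNB
    rwa [sub_add_sub_cancel] at this
  rw [schatten_one_psd hAB]
  have h2 : (A - B).trace ≤ (A - Sᵀ * Q * S).trace := by
    simp only [trace_sub] at h1 ⊢
    linarith
  refine h2.trans ?_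
  have h3 := frob_pyth hQ1 hQ2 (S - Z)
  have h4 : S - Z - Q * (S - Z) = S - Q * S := by
    rw [Matrix.mul_sub, hQ, projOf_mul_self]; abel
  rw [h4] at h3
  have h5 := frob_pyth hQ1 hQ2 S
  have h6 : frob S = A.trace := by rw [frob, hS, hSA]
  have h7 : frob (Q * S) = (Sᵀ * Q * S).trace := by
    rw [frob, transpose_mul, hQ1, Matrix.mul_assoc, ← Matrix.mul_assoc Q, hQ2, Matrix.mul_assoc]
  have h8 := frob_nonneg (Q * (S - Z))
  rw [trace_sub]
  linarith



lemma frob_conj {n : ℕ} {U : Matrix (Fin n) (Fin n) ℝ} (hU : Uᵀ * U = 1)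
    (M : Matrix (Fin n) (Fin n) ℝ) : frob (U * M * Uᵀ) = frob M := by
  have h : (U * M * Uᵀ)ᵀ * (U * M * Uᵀ) = U * (Mᵀ * M) * Uᵀ := by
    rw [transpose_mul, transpose_mul, transpose_transpose]
    calc _ = U * Mᵀ * (Uᵀ * U) * M * Uᵀ := by simp only [Matrix.mul_assoc]
      _ = _ := by rw [hU, Matrix.mul_one]; simp only [Matrix.mul_assoc]
  rw [frob, h, Matrix.trace_mul_comm, ← Matrix.mul_assoc, hU, Matrix.one_mul, frob]

lemma det_bound_rot {r m k : ℕ} {A U : Matrix (Fin (r + m)) (Fin (r + m)) ℝ}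
    (hU1 : Uᵀ * U = 1) (hU : U * Uᵀ = 1)
    (hA : A = U * diagonal (fun i : Fin (r + m) => sval A i) * Uᵀ)
    (Ω' : Matrix (Fin (r + m)) (Fin k) ℝ) (G : Fin r → Fin k → ℝ)
    (hG : ∀ l j : Fin r, Ω' (Fin.castAdd m l) ⬝ᵥ G j = if l = j then 1 else 0) :
    schatten 1 (A - truncate (nystrom A (U * Ω')) r) ≤
      ∑ i : Fin m, sval A (r + i) * (1 + ∑ j, (Ω' (Fin.natAdd r i) ⬝ᵥ G j) ^ 2) := by
  set s : Fin (r + m) → ℝ := fun i => Real.sqrt (sval A i) with hs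
  have hss : ∀ i, s i ^ 2 = sval A i := fun i => Real.sq_sqrt (sval_nonneg _ _)
  let S := U * diagonal s * Uᵀ
  have hS : Sᵀ = S := by
    simp only [S]
    rw [transpose_mul, transpose_mul, diagonal_transpose, transpose_transpose, Matrix.mul_assoc]
  have hSA : S * S = A := by
    conv_rhs => rw [hA]
    calc _ = U * diagonal s * (Uᵀ * U) * diagonal s * Uᵀ := by simp only [S, Matrix.mul_assoc]
      _ = _ := by
        rw [hU1, Matrix.mul_one, Matrix.mul_assoc U, diagonal_mul_diagonal]
        simp only [← sq, hss]
  let Gm : Matrix (Fin k) (Fin r) ℝ := Matrix.of fun a j => G j a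
  let E : Matrix (Fin r) (Fin (r + m)) ℝ :=
    Matrix.of fun l => Fin.addCases (fun j => if l = j then 1 else 0) (fun _ => 0)
  have hX : (Gm * E * Uᵀ).rank ≤ r :=
    (rank_mul_le_left _ _).trans ((rank_mul_le_left _ _).trans (by
      simpa using rank_le_width Gm))
  refine (det_bound hS hSA (U * Ω') (Gm * E * Uᵀ) hX).trans (le_of_eq ?_)
  have h1 : S - S * (U * Ω') * (Gm * E * Uᵀ) =
      U * (diagonal s * (1 - Ω' * Gm * E)) * Uᵀ := by
    have : S * (U * Ω') * (Gm * E * Uᵀ) = U * diagonal s * (Uᵀ * U) * Ω' * Gm * E * Uᵀ := by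
      simp only [S, Matrix.mul_assoc]
    rw [this, hU1, Matrix.mul_one, Matrix.mul_sub, Matrix.mul_one, Matrix.mul_sub, Matrix.sub_mul]
    simp only [S, Matrix.mul_assoc]
  rw [h1, frob_conj hU1, frob_eq]
  have h2 : ∀ i l, (Ω' * Gm) i l = Ω' i ⬝ᵥ G l := fun i l => rfl
  have h3 : ∀ (i : Fin (r + m)) (j : Fin r), (Ω' * Gm * E) i (Fin.castAdd m j) = Ω' i ⬝ᵥ G j := by
    intro i j
    rw [Matrix.mul_apply]
    simp [E, h2]
  have h4 : ∀ (i : Fin (r + m)) (j : Fin m), (Ω' * Gm * E) i (Fin.natAdd r j) = 0 := by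
    intro i j
    rw [Matrix.mul_apply]
    simp [E]
  have h5 : ∀ i j : Fin (r + m), (diagonal s * ((1 : Matrix (Fin (r + m)) (Fin (r + m)) ℝ) - Ω' * Gm * E)) i j ^ 2 =
      sval A i * ((1 : Matrix (Fin (r + m)) (Fin (r + m)) ℝ) i j - (Ω' * Gm * E) i j) ^ 2 := by
    intro i j
    rw [diagonal_mul, mul_pow, hss, Matrix.sub_apply]
  simp only [h5]
  rw [Fin.sum_univ_add]
  have h6 : ∀ l : Fin r, ∑ j, sval A (Fin.castAdd m l) *
      ((1 : Matrix (Fin (r + m)) (Fin (r + m)) ℝ) (Fin.castAdd m l) j -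
        (Ω' * Gm * E) (Fin.castAdd m l) j) ^ 2 = 0 := by
    intro l
    rw [Fin.sum_univ_add]
    have a1 : ∀ x : Fin m, (Fin.castAdd m l : Fin (r + m)) ≠ Fin.natAdd r x := by
      intro x h
      have := congrArg Fin.val h
      simp at this
      omega
    simp [h3, h4, hG, Matrix.one_apply, a1]
  rw [Finset.sum_eq_zero (fun l _ => h6 l), zero_add]
  apply Finset.sum_congr rfl
  intro i _
  rw [← Finset.mul_sum, Fin.sum_univ_add]
  have a1 : ∀ x : Fin r, (Fin.natAdd r i : Fin (r + m)) ≠ Fin.castAdd m x := by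
    intro x h
    have := congrArg Fin.val h
    simp at this
    omega
  simp [h3, h4, Matrix.one_apply, a1, add_comm]



/-! ### Gaussian integrals -/

lemma gauss_exp (t : ℝ) (ht : 0 < t) :
    ∫ x, Real.exp (-t * x ^ 2) ∂(gaussianReal 0 1) = (1 + 2 * t) ^ (-(1 / 2) : ℝ) := by
  rw [integral_gaussianReal_eq_integral_smul one_ne_zero]
  have h1 : ∀ x : ℝ, gaussianPDFReal 0 1 x • Real.exp (-t * x ^ 2) =
      (√(2 * Real.pi))⁻¹ * Real.exp (-(t + 1 / 2) * x ^ 2) := by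
    intro x
    simp only [gaussianPDFReal, smul_eq_mul, NNReal.coe_one, mul_one, sub_zero]
    rw [mul_assoc, ← Real.exp_add]
    congr 2
    ring
  simp only [h1]
  rw [integral_const_mul, integral_gaussian, Real.rpow_neg (by positivity), ← Real.sqrt_eq_rpow,
    ← Real.sqrt_inv, ← Real.sqrt_inv, ← Real.sqrt_mul (by positivity)]
  congr 1
  have := Real.pi_pos
  field_simp
  ring

lemma gauss_exp_pi {k : ℕ} (s : Finset (Fin k)) (t : ℝ) (ht : 0 < t) :
    ∫⁻ x : Fin k → ℝ, ENNReal.ofReal (Real.exp (-t * ∑ i ∈ s, x i ^ 2))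
      ∂(Measure.pi fun _ => gaussianReal 0 1) =
      ENNReal.ofReal ((1 + 2 * t) ^ (-(s.card / 2) : ℝ)) := by
  rw [← ofReal_integral_eq_lintegral_ofReal]
  · congr 1
    have h1 : ∀ x : Fin k → ℝ, Real.exp (-t * ∑ i ∈ s, x i ^ 2) =
        ∏ i, (fun (i : Fin k) (y : ℝ) => if i ∈ s then Real.exp (-t * y ^ 2) else 1) i (x i) := by
      intro x
      rw [Finset.mul_sum, Real.exp_sum, Finset.prod_ite_mem, Finset.univ_inter]
    simp only [h1]
    rw [integral_fintype_prod_eq_prod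
      (f := fun (i : Fin k) (y : ℝ) => if i ∈ s then Real.exp (-t * y ^ 2) else 1)]
    have h2 : ∀ i : Fin k, ∫ y, (if i ∈ s then Real.exp (-t * y ^ 2) else 1) ∂(gaussianReal 0 1) =
        if i ∈ s then (1 + 2 * t) ^ (-(1 / 2) : ℝ) else 1 := by
      intro i
      split_ifs
      · exact gauss_exp t ht
      · simp
    simp only [h2]
    rw [Finset.prod_ite_mem, Finset.univ_inter, Finset.prod_const, ← Real.rpow_mul_natCast (by positivity)]
    congr 1
    ring
  · apply Integrable.of_bound (C := 1)
    · exact Measurable.aestronglyMeasurable (by fun_prop)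
    · refine Filter.Eventually.of_forall fun x => ?_
      rw [Real.norm_eq_abs, Real.abs_exp, Real.exp_le_one_iff]
      have : 0 ≤ ∑ i ∈ s, x i ^ 2 := by positivity
      nlinarith
  · exact Filter.Eventually.of_forall fun x => (Real.exp_pos _).le

lemma inv_eq_lintegral (q : ℝ) (hq : 0 ≤ q) :
    (ENNReal.ofReal q)⁻¹ = ∫⁻ t in Set.Ioi (0 : ℝ), ENNReal.ofReal (Real.exp (-t * q)) := by
  rcases hq.eq_or_lt with h | h
  · subst h
    simp
  · rw [← ofReal_integral_eq_lintegral_ofReal]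
    · have := integral_exp_mul_Ioi (a := -q) (by linarith) 0
      have h2 : ∀ t : ℝ, -t * q = -q * t := fun t => by ring
      simp only [h2]
      rw [this, ENNReal.ofReal_inv_of_pos h |>.symm]
      congr 1
      simp
    · have := integrableOn_exp_mul_Ioi (a := -q) (by linarith) 0
      refine this.congr_fun (fun t _ => ?_) measurableSet_Ioi
      simp [mul_comm]
    · exact Filter.Eventually.of_forall fun x => (Real.exp_pos _).le

lemma lintegral_rpow (d : ℝ) (hd : 2 < d) :
    ∫⁻ t in Set.Ioi (0 : ℝ), ENNReal.ofReal ((1 + 2 * t) ^ (-(d / 2) : ℝ)) =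
      ENNReal.ofReal (1 / (d - 2)) := by
  let g : ℝ → ℝ := fun t => -(1 / (d - 2)) * (1 + 2 * t) ^ (1 - d / 2 : ℝ)
  have hder : ∀ t ∈ Set.Ici (0 : ℝ), HasDerivAt g ((1 + 2 * t) ^ (-(d / 2) : ℝ)) t := by
    intro t ht
    have ht : 0 ≤ t := ht
    have h1 : HasDerivAt (fun t : ℝ => 1 + 2 * t) 2 t := by
      simpa using ((hasDerivAt_id t).const_mul 2).const_add 1
    have h2 := (h1.rpow_const (p := 1 - d / 2) (Or.inl (by positivity))).const_mul (-(1 / (d - 2)))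
    have : d - 2 ≠ 0 := by linarith
    have h3 : -(1 / (d - 2)) * (2 * (1 - d / 2) * (1 + 2 * t) ^ (1 - d / 2 - 1)) =
        (1 + 2 * t) ^ (-(d / 2) : ℝ) := by
      rw [show (1 - d / 2 - 1 : ℝ) = -(d / 2) by ring]
      field_simp
      ring
    rw [h3] at h2
    exact h2
  have hnn : ∀ t ∈ Set.Ioi (0 : ℝ), 0 ≤ (1 + 2 * t) ^ (-(d / 2) : ℝ) := by
    intro t ht
    have ht : 0 < t := ht
    positivity
  have hlim : Filter.Tendsto g Filter.atTop (nhds 0) := by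
    have h1 : Filter.Tendsto (fun t : ℝ => 1 + 2 * t) Filter.atTop Filter.atTop :=
      Filter.tendsto_atTop_add_const_left _ _ (Filter.tendsto_id.const_mul_atTop (by norm_num))
    have h2 := (tendsto_rpow_neg_atTop (y := d / 2 - 1) (by linarith)).comp h1
    have h3 := h2.const_mul (-(1 / (d - 2)))
    rw [mul_zero] at h3
    refine h3.congr fun t => ?_
    simp [g]
  have hintg := integrableOn_Ioi_deriv_of_nonneg' hder hnn hlim
  rw [← ofReal_integral_eq_lintegral_ofReal hintg]
  · rw [integral_Ioi_of_hasDerivAt_of_nonneg' hder hnn hlim]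
    simp [g]
  · exact (ae_restrict_iff' measurableSet_Ioi).mpr (Filter.Eventually.of_forall hnn)

lemma inv_chisq {k : ℕ} (s : Finset (Fin k)) (hs : 2 < s.card) :
    ∫⁻ x : Fin k → ℝ, (ENNReal.ofReal (∑ i ∈ s, x i ^ 2))⁻¹
      ∂(Measure.pi fun _ => gaussianReal 0 1) = ENNReal.ofReal (1 / (s.card - 2)) := by
  have h1 : ∀ x : Fin k → ℝ, (ENNReal.ofReal (∑ i ∈ s, x i ^ 2))⁻¹ =
      ∫⁻ t in Set.Ioi (0 : ℝ), ENNReal.ofReal (Real.exp (-t * ∑ i ∈ s, x i ^ 2)) :=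
    fun x => inv_eq_lintegral _ (by positivity)
  simp only [h1]
  rw [lintegral_lintegral_swap]
  · rw [← lintegral_rpow (s.card : ℝ) (by exact_mod_cast hs)]
    apply setLIntegral_congr_fun measurableSet_Ioi
    intro t ht
    exact gauss_exp_pi s t ht
  · exact Measurable.aemeasurable (by fun_prop)

/-- Second moment of a linear functional. -/
lemma gauss_second_moment {k : ℕ} (v : Fin k → ℝ) :
    ∫⁻ y : Fin k → ℝ, ENNReal.ofReal ((y ⬝ᵥ v) ^ 2) ∂(Measure.pi fun _ => gaussianReal 0 1) =
      ENNReal.ofReal (v ⬝ᵥ v) := by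
  let L : StrongDual ℝ (EuclideanSpace ℝ (Fin k)) := innerSL ℝ (WithLp.toLp 2 v)
  have h1 : ∫⁻ y, ENNReal.ofReal (L y ^ 2) ∂(stdGaussian (EuclideanSpace ℝ (Fin k))) =
      ENNReal.ofReal (v ⬝ᵥ v) := by
    have h2 := variance_dual_stdGaussian L
    have h3 := ofReal_variance (μ := stdGaussian (EuclideanSpace ℝ (Fin k))) (X := L)
      (IsGaussian.memLp_dual _ L 2 (by norm_num))
    rw [evariance_eq_lintegral_ofReal, h2, integral_strongDual_stdGaussian] at h3
    simp only [sub_zero] at h3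
    rw [← h3]
    congr 1
    rw [innerSL_apply_norm, EuclideanSpace.real_norm_sq_eq]
    simp [dotProduct, sq]
  rw [← map_pi_eq_stdGaussian, lintegral_map (by fun_prop) (by fun_prop)] at h1
  rw [← h1]
  rfl

/-- The isometry of `ℝ^{n × k}` given by left multiplication with an orthogonal matrix. -/
noncomputable def rotIso {n k : ℕ} (U : Matrix (Fin n) (Fin n) ℝ) (hU1 : Uᵀ * U = 1) :
    EuclideanSpace ℝ (Fin n × Fin k) →ₗᵢ[ℝ] EuclideanSpace ℝ (Fin n × Fin k) where
  toFun x := WithLp.toLp 2 fun p => ∑ l, U p.1 l * x (l, p.2)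
  map_add' x y := by
    ext p
    simp [mul_add, Finset.sum_add_distrib]
  map_smul' c x := by
    ext p
    simp only [PiLp.smul_apply, smul_eq_mul, RingHom.id_apply, Finset.mul_sum]
    exact Finset.sum_congr rfl fun l _ => by ring
  norm_map' x := by
    have h : ∀ y : Fin n → ℝ, (U *ᵥ y) ⬝ᵥ (U *ᵥ y) = y ⬝ᵥ y := by
      intro y
      rw [Matrix.dotProduct_mulVec, ← Matrix.mulVec_transpose, Matrix.mulVec_mulVec, hU1,
        Matrix.one_mulVec]
    rw [EuclideanSpace.norm_eq, EuclideanSpace.norm_eq]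
    congr 1
    rw [Fintype.sum_prod_type_right, Fintype.sum_prod_type_right]
    apply Finset.sum_congr rfl
    intro j _
    have := h (fun l => x (l, j))
    simpa [dotProduct, mulVec, sq] using this

/-- Rotation invariance of the Gaussian ensemble. -/
lemma gauss_rot {n k : ℕ} (U : Matrix (Fin n) (Fin n) ℝ) (hU1 : Uᵀ * U = 1) :
    (Measure.pi fun _ : Fin n => Measure.pi fun _ : Fin k => gaussianReal 0 1).map
      (fun ω : Fin n → Fin k → ℝ => fun i j => ∑ l, U i l * ω l j) =
    (Measure.pi fun _ : Fin n => Measure.pi fun _ : Fin k => gaussianReal 0 1) := by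
  let e : EuclideanSpace ℝ (Fin n × Fin k) → (Fin n → Fin k → ℝ) := fun x i j => x (i, j)
  have he : Measurable e := by
    refine measurable_pi_lambda _ fun i => measurable_pi_lambda _ fun j => ?_
    fun_prop
  have h1 : (Measure.pi fun _ : Fin n => Measure.pi fun _ : Fin k => gaussianReal 0 1) =
      (stdGaussian (EuclideanSpace ℝ (Fin n × Fin k))).map e := by
    have h2 := Measure.infinitePi_map_curry (fun (_ : Fin n) (_ : Fin k) => gaussianReal 0 1)
    simp only [Measure.infinitePi_eq_pi] at h2
    rw [← h2, ← map_pi_eq_stdGaussian, Measure.map_map he (by fun_prop)]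
    rfl
  let f := (rotIso (k := k) U hU1).toLinearIsometryEquiv rfl
  have hR : Measurable (fun ω : Fin n → Fin k → ℝ => fun i j => ∑ l, U i l * ω l j) := by
    refine measurable_pi_lambda _ fun i => measurable_pi_lambda _ fun j => ?_
    fun_prop
  have hf : Measurable f := f.continuous.measurable
  conv_lhs => rw [h1]
  rw [Measure.map_map hR he]
  have h3 : (fun ω : Fin n → Fin k → ℝ => fun i j => ∑ l, U i l * ω l j) ∘ e = e ∘ f := rfl
  rw [h3, ← Measure.map_map he hf, stdGaussian_map, ← h1]

/-- Splitting off the first `r` rows. -/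
lemma pi_append {r m : ℕ} {X : Type*} [MeasurableSpace X] (μ : Measure X) [IsProbabilityMeasure μ] :
    ((Measure.pi fun _ : Fin r => μ).prod (Measure.pi fun _ : Fin m => μ)).map
      (fun p => Fin.append p.1 p.2) = Measure.pi fun _ : Fin (r + m) => μ := by
  symm
  have hm : Measurable (fun p : (Fin r → X) × (Fin m → X) => Fin.append p.1 p.2) := by
    refine measurable_pi_lambda _ fun i => ?_
    refine Fin.addCases (fun i => ?_) (fun i => ?_) i
    · simp only [Fin.append_left]; fun_prop
    · simp only [Fin.append_right]; fun_prop
  apply Measure.pi_eq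
  intro s hs
  rw [Measure.map_apply hm (MeasurableSet.univ_pi hs)]
  have : (fun p : (Fin r → X) × (Fin m → X) => Fin.append p.1 p.2) ⁻¹' (Set.univ.pi s) =
      (Set.univ.pi fun i => s (Fin.castAdd m i)) ×ˢ (Set.univ.pi fun i => s (Fin.natAdd r i)) := by
    ext p
    simp only [Set.mem_preimage, Set.mem_pi, Set.mem_univ, forall_const, Set.mem_prod]
    constructor
    · intro h
      exact ⟨fun i => by simpa using h (Fin.castAdd m i), fun i => by simpa using h (Fin.natAdd r i)⟩
    · rintro ⟨h1, h2⟩ i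
      refine Fin.addCases (fun i => ?_) (fun i => ?_) i
      · simpa using h1 i
      · simpa using h2 i
  rw [this, Measure.prod_prod, Measure.pi_pi, Measure.pi_pi, Fin.prod_univ_add]



/-! ### Distances between Gaussian rows -/

/-- Squared distance from row `j` to the span of the other rows. -/
noncomputable def gap {r k : ℕ} (j : Fin r) (a : Fin r → Fin k → ℝ) : ℝ≥0∞ :=
  ⨅ c : Fin r → ℝ, ENNReal.ofReal (∑ x, (a j x - ∑ l ∈ Finset.univ.erase j, c l * a l x) ^ 2)

lemma measurable_gap {r k : ℕ} (j : Fin r) : Measurable (gap (k := k) j) := by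
  apply UpperSemicontinuous.measurable
  apply upperSemicontinuous_iInf
  intro c
  apply Continuous.upperSemicontinuous
  apply ENNReal.continuous_ofReal.comp
  fun_prop

/-- Span of the rows other than `j`. -/
noncomputable def others {r k : ℕ} (j : Fin r) (a : Fin r → Fin k → ℝ) :
    Submodule ℝ (EuclideanSpace ℝ (Fin k)) :=
  Submodule.span ℝ ((Finset.univ.erase j).image fun l => (WithLp.toLp 2 (a l) : EuclideanSpace ℝ (Fin k)))

lemma others_update {r k : ℕ} (j : Fin r) (a : Fin r → Fin k → ℝ) (y : Fin k → ℝ) :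
    others j (Function.update a j y) = others j a := by
  unfold others
  congr 2
  apply Finset.image_congr
  intro l hl
  have : l ≠ j := by simpa using hl
  simp [Function.update_of_ne this]

lemma finrank_others {r k : ℕ} (j : Fin r) (a : Fin r → Fin k → ℝ) :
    k ≤ Module.finrank ℝ (others j a)ᗮ + (r - 1) := by
  have h1 : Module.finrank ℝ (others j a) ≤ r - 1 := by
    refine (finrank_span_finset_le_card _).trans (Finset.card_image_le.trans ?_)
    simp
  have h2 := (others j a).finrank_add_finrank_orthogonal
  rw [finrank_euclideanSpace_fin] at h2
  omega

lemma gap_eq {r k : ℕ} (j : Fin r) (a : Fin r → Fin k → ℝ) :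
    gap j a = ENNReal.ofReal (‖(others j a)ᗮ.starProjection (WithLp.toLp 2 (a j))‖ ^ 2) := by
  have hsum : ∀ c : Fin r → ℝ, ∑ x, (a j x - ∑ l ∈ Finset.univ.erase j, c l * a l x) ^ 2 =
      ‖(WithLp.toLp 2 (a j) : EuclideanSpace ℝ (Fin k)) -
        ∑ l ∈ Finset.univ.erase j, c l • (WithLp.toLp 2 (a l) : EuclideanSpace ℝ (Fin k))‖ ^ 2 := by
    intro c
    rw [EuclideanSpace.real_norm_sq_eq]
    simp
  have hproj : ∀ z : EuclideanSpace ℝ (Fin k), (others j a)ᗮ.starProjection z =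
      z - (others j a).starProjection z := by
    intro z
    rw [Submodule.starProjection_orthogonal_val]
  unfold gap
  simp only [hsum]
  apply le_antisymm
  · rw [hproj]
    have hmem : (others j a).starProjection (WithLp.toLp 2 (a j)) ∈ others j a :=
      Submodule.starProjection_apply_mem _ _
    obtain ⟨c, hc⟩ : ∃ c : Fin r → ℝ, ∑ l ∈ Finset.univ.erase j,
        c l • (WithLp.toLp 2 (a l) : EuclideanSpace ℝ (Fin k)) =
          (others j a).starProjection (WithLp.toLp 2 (a j)) := by
      generalize (others j a).starProjection (WithLp.toLp 2 (a j)) = w at hmem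
      unfold others at hmem
      rw [Finset.coe_image, Submodule.mem_span_image_finset_iff_exists_fun'] at hmem
      exact hmem
    refine (iInf_le _ c).trans ?_
    rw [hc]
  · apply le_iInf
    intro c
    apply ENNReal.ofReal_le_ofReal
    have h1 : (others j a)ᗮ.starProjection (WithLp.toLp 2 (a j)) =
        (others j a)ᗮ.starProjection ((WithLp.toLp 2 (a j) : EuclideanSpace ℝ (Fin k)) -
        ∑ l ∈ Finset.univ.erase j, c l • (WithLp.toLp 2 (a l) : EuclideanSpace ℝ (Fin k))) := by
      rw [map_sub]
      have : ∑ l ∈ Finset.univ.erase j, c l • (WithLp.toLp 2 (a l) : EuclideanSpace ℝ (Fin k)) ∈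
          others j a := by
        apply Submodule.sum_mem
        intro l hl
        apply Submodule.smul_mem
        apply Submodule.subset_span
        exact Finset.mem_coe.mpr (Finset.mem_image_of_mem _ hl)
      rw [hproj (∑ l ∈ _, _), Submodule.starProjection_eq_self_iff.mpr this, sub_self, sub_zero]
    rw [h1]
    gcongr
    exact Submodule.norm_starProjection_apply_le _ _

lemma proj_inv_moment {k d : ℕ} (V : Submodule ℝ (EuclideanSpace ℝ (Fin k)))
    (hd : d ≤ Module.finrank ℝ V) (hd2 : 2 < d) :
    ∫⁻ y : Fin k → ℝ, (ENNReal.ofReal (‖V.starProjection (WithLp.toLp 2 y)‖ ^ 2))⁻¹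
      ∂(Measure.pi fun _ => gaussianReal 0 1) ≤ ENNReal.ofReal (1 / (d - 2)) := by
  set D := Module.finrank ℝ V with hD
  have hDk : D ≤ k := by
    have := V.finrank_le
    rwa [finrank_euclideanSpace_fin] at this
  let b₀ := stdOrthonormalBasis ℝ V
  let v : Fin k → EuclideanSpace ℝ (Fin k) := fun i =>
    if h : (i : ℕ) < D then (b₀ ⟨i, h⟩ : EuclideanSpace ℝ (Fin k)) else 0
  let s : Finset (Fin k) := Finset.univ.filter fun i => (i : ℕ) < D
  have hs : ∀ i, i ∈ s ↔ (i : ℕ) < D := fun i => by simp [s]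
  have hcard : s.card = D := by
    have : s = Finset.univ.image (Fin.castLE hDk) := by
      ext i
      simp only [hs, Finset.mem_image, Finset.mem_univ, true_and]
      constructor
      · intro h; exact ⟨⟨i, h⟩, rfl⟩
      · rintro ⟨x, rfl⟩; exact x.2
    rw [this, Finset.card_image_of_injective _ (Fin.castLE_injective hDk)]
    simp
  have hort : Orthonormal ℝ ((s : Set (Fin k)).domRestrict v) := by
    have h0 : Orthonormal ℝ (fun i => (b₀ i : EuclideanSpace ℝ (Fin k))) :=
      b₀.orthonormal.comp_linearIsometry V.subtypeₗᵢ
    have h1 := h0.comp (fun i : (s : Set (Fin k)) => (⟨i.1, (hs _).mp i.2⟩ : Fin D)) (by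
      intro x y h
      have := congrArg Fin.val h
      exact Subtype.ext (Fin.ext this))
    convert h1 using 1
    ext1 i
    have : ((i : Fin k) : ℕ) < D := (hs _).mp i.2
    change (if h : ((i : Fin k) : ℕ) < D then (b₀ ⟨i, h⟩ : EuclideanSpace ℝ (Fin k)) else 0) = _
    rw [dif_pos this]
    rfl
  obtain ⟨b, hb⟩ := hort.exists_orthonormalBasis_extension_of_card_eq
    (by rw [finrank_euclideanSpace_fin, Fintype.card_fin])
  have hbV : ∀ i ∈ s, b i ∈ V := by
    intro i hi
    rw [hb i hi]
    simp only [v, (hs i).mp hi, dif_pos]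
    exact Subtype.mem _
  have hF : Measurable fun z : EuclideanSpace ℝ (Fin k) =>
      (ENNReal.ofReal (‖V.starProjection z‖ ^ 2))⁻¹ := by
    fun_prop
  have h1 : ∫⁻ y : Fin k → ℝ, (ENNReal.ofReal (‖V.starProjection (WithLp.toLp 2 y)‖ ^ 2))⁻¹
      ∂(Measure.pi fun _ => gaussianReal 0 1) =
      ∫⁻ z, (ENNReal.ofReal (‖V.starProjection z‖ ^ 2))⁻¹
        ∂(stdGaussian (EuclideanSpace ℝ (Fin k))) := by
    rw [← map_pi_eq_stdGaussian, lintegral_map hF (by fun_prop)]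
  rw [h1, stdGaussian_eq_map_pi_orthonormalBasis b, lintegral_map hF (by fun_prop)]
  calc _ ≤ ∫⁻ x : Fin k → ℝ, (ENNReal.ofReal (∑ i ∈ s, x i ^ 2))⁻¹
        ∂(Measure.pi fun _ => gaussianReal 0 1) := by
        apply lintegral_mono
        intro x
        apply ENNReal.inv_le_inv.mpr
        apply ENNReal.ofReal_le_ofReal
        rw [← b.sum_sq_inner_right]
        have h2 : ∀ i ∈ s, inner ℝ (b i) (V.starProjection (∑ i, x i • b i)) = x i := by
          intro i hi
          rw [← Submodule.inner_starProjection_left_eq_right,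
            Submodule.starProjection_eq_self_iff.mpr (hbV i hi)]
          rw [inner_sum]
          simp [inner_smul_right, b.inner_eq_ite]
        calc ∑ i ∈ s, x i ^ 2 = ∑ i ∈ s, inner ℝ (b i) (V.starProjection (∑ i, x i • b i)) ^ 2 :=
              Finset.sum_congr rfl fun i hi => by rw [h2 i hi]
          _ ≤ _ := Finset.sum_le_sum_of_subset_of_nonneg (Finset.subset_univ _)
              fun _ _ _ => sq_nonneg _
    _ = ENNReal.ofReal (1 / (s.card - 2)) := inv_chisq s (by omega)
    _ ≤ _ := by
        apply ENNReal.ofReal_le_ofReal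
        rw [hcard]
        have : (2 : ℝ) < d := by exact_mod_cast hd2
        have h3 : (d : ℝ) ≤ D := by exact_mod_cast hd
        apply one_div_le_one_div_of_le <;> linarith

lemma gap_inv_moment {r k : ℕ} (hk : r + 1 < k) (j : Fin r) :
    ∫⁻ a : Fin r → Fin k → ℝ, (gap j a)⁻¹
      ∂(Measure.pi fun _ => Measure.pi fun _ => gaussianReal 0 1) ≤
      ENNReal.ofReal (1 / ((k : ℝ) - r - 1)) := by
  have hr : 1 ≤ r := by have := j.2; omega
  have hm : Measurable fun a : Fin r → Fin k → ℝ => (gap j a)⁻¹ := (measurable_gap j).inv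
  rw [lintegral_eq_lmarginal_univ (fun _ _ => 0), lmarginal_erase' _ hm (Finset.mem_univ j)]
  have h1 : ∀ a : Fin r → Fin k → ℝ,
      ∫⁻ y, (gap j (Function.update a j y))⁻¹ ∂(Measure.pi fun _ => gaussianReal 0 1) ≤
      ENNReal.ofReal (1 / ((k : ℝ) - r - 1)) := by
    intro a
    simp only [gap_eq, others_update, Function.update_self]
    have h2 := finrank_others j a
    have h3 := proj_inv_moment (d := k - r + 1) (others j a)ᗮ (by omega) (by omega)
    refine h3.trans (le_of_eq ?_)
    congr 2
    rw [Nat.cast_add, Nat.cast_sub (by omega)]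
    push_cast
    ring
  refine (lmarginal_mono (g := fun _ => ENNReal.ofReal (1 / ((k : ℝ) - r - 1))) h1 _).trans ?_
  simp [lmarginal]

lemma exists_dual {r k : ℕ} (a : Fin r → Fin k → ℝ) (j : Fin r) (h : gap j a ≠ 0) :
    ∃ g : Fin k → ℝ, (∀ l, a l ⬝ᵥ g = if l = j then 1 else 0) ∧
      ENNReal.ofReal (g ⬝ᵥ g) ≤ (gap j a)⁻¹ := by
  set p := (others j a)ᗮ.starProjection (WithLp.toLp 2 (a j)) with hp
  have hg := gap_eq j a
  rw [← hp] at hg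
  have hp0 : 0 < ‖p‖ ^ 2 := by
    have hne : p ≠ 0 := by
      rw [hg] at h
      simpa using h
    exact pow_pos (norm_pos_iff.mpr hne) 2
  have hpm : p ∈ (others j a)ᗮ := Submodule.starProjection_apply_mem _ _
  have hdot : ∀ y : Fin k → ℝ, y ⬝ᵥ (WithLp.ofLp p) = inner ℝ p (WithLp.toLp 2 y) := by
    intro y
    simp [EuclideanSpace.inner_eq_star_dotProduct]
  refine ⟨(‖p‖ ^ 2)⁻¹ • WithLp.ofLp p, ?_, ?_⟩
  · intro l
    rw [dotProduct_smul, hdot]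
    split_ifs with hl
    · subst hl
      have : inner ℝ p (WithLp.toLp 2 (a l)) = ‖p‖ ^ 2 := by
        rw [← real_inner_self_eq_norm_sq]
        conv_rhs => rw [hp, Submodule.inner_starProjection_left_eq_right,
          Submodule.starProjection_eq_self_iff.mpr hpm]
        conv_lhs => rw [← Submodule.starProjection_eq_self_iff.mpr hpm,
          Submodule.inner_starProjection_left_eq_right]
        rw [← hp, real_inner_comm, hp, ← Submodule.inner_starProjection_left_eq_right, ← hp,
          Submodule.starProjection_eq_self_iff.mpr hpm, real_inner_comm]
      rw [this, smul_eq_mul, inv_mul_cancel₀ hp0.ne']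
    · have : inner ℝ p (WithLp.toLp 2 (a l)) = 0 := by
        apply Submodule.inner_left_of_mem_orthogonal _ hpm
        apply Submodule.subset_span
        exact Finset.mem_coe.mpr (Finset.mem_image_of_mem _ (by simpa using hl))
      rw [this, smul_zero]
  · rw [dotProduct_smul, smul_dotProduct, hdot, WithLp.toLp_ofLp, real_inner_self_eq_norm_sq, hg,
      ← ENNReal.ofReal_inv_of_pos hp0]
    apply ENNReal.ofReal_le_ofReal
    simp only [smul_eq_mul]
    rw [inv_mul_cancel₀ hp0.ne', mul_one]



/-- Integral over the lower Gaussian block for fixed dual vectors. -/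
lemma inner_moment {r m k : ℕ} (c : Fin m → ℝ) (hc : ∀ i, 0 ≤ c i) (G : Fin r → Fin k → ℝ) :
    ∫⁻ b : Fin m → Fin k → ℝ, ENNReal.ofReal (∑ i, c i * (1 + ∑ j, (b i ⬝ᵥ G j) ^ 2))
      ∂(Measure.pi fun _ => Measure.pi fun _ => gaussianReal 0 1) =
    ENNReal.ofReal (∑ i, c i) * (1 + ∑ j, ENNReal.ofReal (G j ⬝ᵥ G j)) := by
  have hsq : ∀ (b : Fin m → Fin k → ℝ) (i : Fin m), 0 ≤ ∑ j, (b i ⬝ᵥ G j) ^ 2 :=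
    fun b i => Finset.sum_nonneg fun j _ => sq_nonneg _
  have h1 : ∀ b : Fin m → Fin k → ℝ,
      ENNReal.ofReal (∑ i, c i * (1 + ∑ j, (b i ⬝ᵥ G j) ^ 2)) =
      ∑ i, ENNReal.ofReal (c i) * (1 + ∑ j, ENNReal.ofReal ((b i ⬝ᵥ G j) ^ 2)) := by
    intro b
    rw [ENNReal.ofReal_sum_of_nonneg fun i _ => mul_nonneg (hc i) (by linarith [hsq b i])]
    refine Finset.sum_congr rfl fun i _ => ?_
    rw [ENNReal.ofReal_mul (hc i), ENNReal.ofReal_add zero_le_one (hsq b i), ENNReal.ofReal_one,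
      ENNReal.ofReal_sum_of_nonneg fun j _ => sq_nonneg _]
  simp only [h1]
  have hm : ∀ (i : Fin m) (j : Fin r),
      Measurable fun b : Fin m → Fin k → ℝ => ENNReal.ofReal ((b i ⬝ᵥ G j) ^ 2) := by
    intro i j
    apply Measurable.ennreal_ofReal
    unfold dotProduct
    fun_prop
  rw [lintegral_finsetSum]
  · rw [ENNReal.ofReal_sum_of_nonneg fun i _ => hc i, Finset.sum_mul]
    refine Finset.sum_congr rfl fun i _ => ?_
    have hmm : Measurable fun b : Fin m → Fin k → ℝ =>
        1 + ∑ j, ENNReal.ofReal ((b i ⬝ᵥ G j) ^ 2) :=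
      measurable_const.add (Finset.measurable_sum _ fun j _ => hm i j)
    rw [lintegral_const_mul _ hmm,
      lintegral_add_left measurable_const, lintegral_finsetSum _ fun j _ => hm i j]
    congr 2
    · simp
    · refine Finset.sum_congr rfl fun j _ => ?_
      rw [← gauss_second_moment]
      have hmp := measurePreserving_eval
        (fun _ : Fin m => Measure.pi fun _ : Fin k => gaussianReal 0 1) i
      refine hmp.lintegral_comp (f := fun y => ENNReal.ofReal ((y ⬝ᵥ G j) ^ 2)) ?_
      apply Measurable.ennreal_ofReal
      unfold dotProduct
      fun_prop
  · intro i _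
    exact (measurable_const.add (Finset.measurable_sum _ fun j _ => hm i j)).const_mul _

lemma lintegral_bound {r m k : ℕ} (A : Matrix (Fin (r + m)) (Fin (r + m)) ℝ)
    (hA : A.PosSemidef) (hk : r + 1 < k) :
    ∫⁻ ω, ENNReal.ofReal (schatten 1 (A - truncate (nystrom A (Matrix.of ω)) r))
      ∂gaussianEnsemble (r + m) k ≤
    ENNReal.ofReal (∑ i : Fin m, sval A (r + i)) *
      (1 + r * ENNReal.ofReal (1 / ((k : ℝ) - r - 1))) := by
  obtain ⟨U, hU1, hU2, hAU⟩ := psd_spectral hA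
  set F : (Fin (r + m) → Fin k → ℝ) → ℝ≥0∞ := fun ω =>
    ENNReal.ofReal (schatten 1 (A - truncate (nystrom A (Matrix.of ω)) r)) with hF
  set R : (Fin (r + m) → Fin k → ℝ) → (Fin (r + m) → Fin k → ℝ) :=
    fun ω i j => ∑ l, U i l * ω l j with hR
  set T : ℝ≥0∞ := ENNReal.ofReal (∑ i : Fin m, sval A (r + i)) with hT
  have hfin : ∀ᵐ a ∂(Measure.pi fun _ : Fin r => Measure.pi fun _ : Fin k => gaussianReal 0 1),
      ∀ j, gap j a ≠ 0 := by
    rw [ae_all_iff]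
    intro j
    have h := ae_lt_top (measurable_gap (k := k) j).inv
      ((gap_inv_moment hk j).trans_lt ENNReal.ofReal_lt_top).ne
    filter_upwards [h] with a ha h0
    simp [h0] at ha
  have hinner : ∀ᵐ a ∂(Measure.pi fun _ : Fin r => Measure.pi fun _ : Fin k => gaussianReal 0 1),
      ∫⁻ b, F (R (Fin.append a b))
        ∂(Measure.pi fun _ : Fin m => Measure.pi fun _ : Fin k => gaussianReal 0 1) ≤
      T * (1 + ∑ j, (gap j a)⁻¹) := by
    filter_upwards [hfin] with a ha
    choose G hG1 hG2 using fun j => exists_dual a j (ha j)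
    have hpt : ∀ b, F (R (Fin.append a b)) ≤ ENNReal.ofReal
        (∑ i : Fin m, sval A (r + i) * (1 + ∑ j, (b i ⬝ᵥ G j) ^ 2)) := by
      intro b
      apply ENNReal.ofReal_le_ofReal
      have h := det_bound_rot hU1 hU2 hAU (Matrix.of (Fin.append a b)) G (by
        intro l j
        rw [← hG1 j l]
        congr 1
        exact Fin.append_left a b l)
      have e1 : ∀ i : Fin m, (Matrix.of (Fin.append a b)) (Fin.natAdd r i) = b i :=
        fun i => Fin.append_right a b i
      simp only [e1] at h
      exact h
    refine (lintegral_mono hpt).trans ?_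
    rw [inner_moment _ fun i => sval_nonneg _ _]
    gcongr with j
    exact hG2 j
  calc ∫⁻ ω, F ω ∂gaussianEnsemble (r + m) k
      = ∫⁻ ω, F ω ∂((gaussianEnsemble (r + m) k).map R) := by
        unfold gaussianEnsemble
        rw [gauss_rot U hU1]
    _ ≤ ∫⁻ ω, F (R ω) ∂gaussianEnsemble (r + m) k := lintegral_map_le _ _
    _ = ∫⁻ ω, F (R ω) ∂(((Measure.pi fun _ : Fin r => Measure.pi fun _ : Fin k =>
          gaussianReal 0 1).prod (Measure.pi fun _ : Fin m => Measure.pi fun _ : Fin k =>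
          gaussianReal 0 1)).map (fun p => Fin.append p.1 p.2)) := by
        rw [pi_append]
        rfl
    _ ≤ _ := lintegral_map_le _ _
    _ ≤ _ := lintegral_prod_le _
    _ ≤ _ := lintegral_mono_ae hinner
    _ = T * (1 + ∑ j : Fin r, ∫⁻ a : Fin r → Fin k → ℝ, (gap j a)⁻¹
          ∂(Measure.pi fun _ => Measure.pi fun _ => gaussianReal 0 1)) := by
        have hms : ∀ j ∈ (Finset.univ : Finset (Fin r)),
          Measurable fun a : Fin r → Fin k → ℝ => (gap j a)⁻¹ := fun j _ => (measurable_gap j).inv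
        have hmm : Measurable fun a : Fin r → Fin k → ℝ => 1 + ∑ j, (gap j a)⁻¹ :=
          measurable_const.add (Finset.measurable_sum _ hms)
        rw [lintegral_const_mul _ hmm,
          lintegral_add_left measurable_const, lintegral_finsetSum _ hms]
        simp
    _ ≤ T * (1 + ∑ j : Fin r, ENNReal.ofReal (1 / ((k : ℝ) - r - 1))) := by
        gcongr with j
        exact gap_inv_moment hk j
    _ = _ := by simp

theorem stmt2 {n k r : ℕ} (A : Matrix (Fin n) (Fin n) ℝ) (hA : A.PosSemidef)
    (hr : 1 ≤ r) (ε : ℝ) (hε : 0 < ε) (hk : (k : ℝ) = (1 + 1 / ε) * r + 1)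
    (hrk : r < k) (hkn : k ≤ n) :
    (∫ ω, schatten 1 (A - truncate (nystrom A (Matrix.of ω)) r) ∂ gaussianEnsemble n k)
      ≤ (1 + ε) * schatten 1 (A - truncate A r) := by
  have hrpos : (0 : ℝ) < r := by exact_mod_cast hr
  have hdiff : (k : ℝ) - r - 1 = r / ε := by rw [hk]; ring
  have hdpos : (0 : ℝ) < r / ε := by positivity
  have hk1 : r + 1 < k := by
    have : ((r + 1 : ℕ) : ℝ) < k := by push_cast; linarith
    exact_mod_cast this
  obtain ⟨m, rfl⟩ : ∃ m, n = r + m := ⟨n - r, by omega⟩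
  set T : ℝ := ∑ i : Fin m, sval A (r + i) with hT
  have hT0 : 0 ≤ T := Finset.sum_nonneg fun i _ => sval_nonneg _ _
  have hRHS : T ≤ schatten 1 (A - truncate A r) := by
    have h := tail_le_schatten A (truncate A r) (truncate_spec A r).1
    rw [Fin.sum_univ_add] at h
    simpa using h
  have hfin : (∫ ω, schatten 1 (A - truncate (nystrom A (Matrix.of ω)) r)
      ∂ gaussianEnsemble (r + m) k) ≤ (1 + ε) * T := by
    by_cases hintg : Integrable (fun ω : Fin (r + m) → Fin k → ℝ =>
      schatten 1 (A - truncate (nystrom A (Matrix.of ω)) r)) (gaussianEnsemble (r + m) k)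
    · rw [integral_eq_lintegral_of_nonneg_ae
        (Filter.Eventually.of_forall fun ω => schatten_nonneg _) hintg.1]
      apply ENNReal.toReal_le_of_le_ofReal (by positivity)
      refine (lintegral_bound A hA hk1).trans (le_of_eq ?_)
      rw [hdiff, mul_comm (1 + ε), ENNReal.ofReal_mul hT0, ENNReal.ofReal_add zero_le_one hε.le,
        ENNReal.ofReal_one, ← ENNReal.ofReal_natCast r, ← ENNReal.ofReal_mul hrpos.le]
      congr 3
      field_simp
    · rw [integral_undef hintg]
      positivity
  refine hfin.trans ?_
  gcongr


end PsdSketch
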